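/- arXiv:1212.4787 — 4 statements merged into one kernel-verified Lean document; each statement's English description precedes it below -/
import Mathlib

section
/- Let Φ : M_n(ℂ) → M_p(ℂ) be a ℂ-linear map and let t denote the transpose map. Then t ∘ Φ is completely positive if and only if Φ ∘ t is completely positive. -/
open Matrix Kronecker
open scoped ComplexOrder

noncomputable section

/-- A linear map `Φ` from matrices indexed by `α` to `p × p` matrices is completely positive
if for every `k ≥ 1` and every positive semidefinite matrix `A` indexed by `Fin k × α`,
the block matrix whose `(r,s)` block is `Φ` applied to the `(r,s)` block of `A` is
positive semidefinite. -/
def IsCompletelyPositive {α : Type*} [Fintype α] [DecidableEq α] {p : ℕ}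
    (Φ : Matrix α α ℂ →ₗ[ℂ] Matrix (Fin p) (Fin p) ℂ) : Prop :=
  ∀ (k : ℕ), 0 < k → ∀ A : Matrix (Fin k × α) (Fin k × α) ℂ, A.PosSemidef →
    (Matrix.of fun (r s : Fin k × Fin p) =>
      Φ (Matrix.of fun a b => A (r.1, a) (s.1, b)) r.2 s.2).PosSemidef

/-- The transpose map `X ↦ Xᵀ` as a linear map on square matrices. -/
def transposeMap (α : Type*) : Matrix α α ℂ →ₗ[ℂ] Matrix α α ℂ where
  toFun X := Xᵀ
  map_add' := fun _ _ => Matrix.transpose_add _ _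
  map_smul' := fun _ _ => Matrix.transpose_smul _ _

theorem transpose_comp_cp_iff_comp_transpose_cp (n p : ℕ)
    (Φ : Matrix (Fin n) (Fin n) ℂ →ₗ[ℂ] Matrix (Fin p) (Fin p) ℂ) :
    IsCompletelyPositive (transposeMap (Fin p) ∘ₗ Φ) ↔
      IsCompletelyPositive (Φ ∘ₗ transposeMap (Fin n)) := by
  constructor
  -- The `(r,s)` block of `Aᵀ` is the transpose of the `(s,r)` block of `A`, so the transpose of the
  -- block matrix obtained from `Aᵀ` under one map is, by unfolding, the one obtained from `A`
  -- under the other map.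
  · intro h k hk A hA
    exact (h k hk Aᵀ hA.transpose).transpose
  · intro h k hk A hA
    exact (h k hk Aᵀ hA.transpose).transpose
end
end

section
/- Let Φ : M_n(ℂ) → M_n(ℂ) be an order isomorphism, i.e., a linear bijection such that both Φ and Φ⁻¹ map positive semidefinite matrices to positive semidefinite matrices. Then there exists an invertible matrix C ∈ M_n(ℂ) such that either Φ(X) = C X Cᴴ for all X, or Φ(X) = (C X Cᴴ)ᵀ for all X. Moreover, if n > 1, these two cases cannot occur simultaneously: there are no invertible C, D ∈ M_n(ℂ) with C X Cᴴ = (D X Dᴴ)ᵀ for all X. -/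
/-!
The matrices `v vᴴ` are exactly the matrices spanning extreme rays of the positive semidefinite cone
(together with `0`), so an order isomorphism `Φ` sends each `v vᴴ` to some `w wᴴ`
(`exists_map_vecMulVec`). In particular `Φ(Eᵢᵢ) = wᵢ wᵢᴴ`; if `W` has columns `wᵢ`, then
`W Wᴴ = Φ(1)`, which is invertible because `1 = Φ(Φ⁻¹(1)) ≤ c Φ(1)` for some `c`. Hence
`Ψ(X) = W⁻¹ Φ(X) W⁻ᴴ` still sends each `v vᴴ` to some `w wᴴ`, and fixes every `Eᵢᵢ`.

For such a normalized `Ψ` (`normalized_classification`), nonnegativity of the diagonal entries of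
`Ψ(v vᴴ)` for `v = eᵢ + z eⱼ` forces `Ψ` to preserve diagonals. Since `Ψ(v vᴴ)` has rank one, its
`(k, l)` entry then vanishes as soon as `v k = 0` or `v l = 0`, and therefore, off the diagonal,
`Ψ(X)ₖₗ = aₖₗ Xₖₗ + bₖₗ Xₗₖ`. Expanding the 2×2 minors of `Ψ(v vᴴ)`, which vanish for all `v`, gives
`aᵢⱼ bⱼₖ = 0` and the cocycle identities `aᵢₖ = aᵢⱼ aⱼₖ`, `bᵢₖ = bᵢⱼ bⱼₖ`. So one of the families
`a`, `b` vanishes off the diagonal, the other is a coboundary, and `Ψ` is conjugation by a diagonal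
matrix, possibly followed by transposition.

The two forms are incompatible for `n > 1`, since `X ↦ Xᵀ` is not of the form `X ↦ E X Eᴴ`, as one
sees on the matrix units at `(0, 0)` and `(0, 1)`.
-/

open Matrix
open scoped ComplexOrder

noncomputable section

/-! ### Polynomial identities in `z` and its conjugate -/

lemma linear_conj_zero {a b : ℂ} (h : ∀ z : ℂ, star z * a + z * b = 0) : a = 0 ∧ b = 0 := by
  have h1 := h 1
  have h2 := h Complex.I
  simp at h1 h2
  have hI := Complex.I_mul_I
  constructor
  · linear_combination (1/2) * h1 + (1/2) * Complex.I * h2 + (1/2) * (a - b) * hI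
  · linear_combination (1/2) * h1 - (1/2) * Complex.I * h2 - (1/2) * (a - b) * hI

lemma quadratic_conj_zero {P Q R : ℂ}
    (h : ∀ z : ℂ, star z * star z * P + z * z * Q + z * star z * R = 0) :
    P = 0 ∧ Q = 0 ∧ R = 0 := by
  have h1 := h 1
  have h2 := h Complex.I
  have h3 := h (1 + Complex.I)
  simp at h1 h2 h3
  have hI := Complex.I_mul_I
  have hR : R = 0 := by linear_combination (1/2) * h1 + (1/2) * h2
  have hs : P + Q = 0 := by linear_combination h1 - hR
  have hd : P - Q = 0 := by
    subst hR
    linear_combination (Complex.I / 2) * h3 - (1/2) * Complex.I * (1+Complex.I*Complex.I) * hs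
      + (P - Q) * hI
  exact ⟨by linear_combination (1/2) * hs + (1/2) * hd,
    by linear_combination (1/2) * hs - (1/2) * hd, hR⟩

lemma real_linear_nonneg {c p : ℂ} (h : ∀ t : ℝ, 0 ≤ c + (t : ℂ) * p) : p = 0 := by
  simp only [Complex.nonneg_iff, Complex.add_re, Complex.add_im, Complex.re_ofReal_mul,
    Complex.im_ofReal_mul] at h
  have him : p.im = 0 := by
    have h0 := (h 0).2
    have h1 := (h 1).2
    linarith
  have hre : p.re = 0 := by
    by_contra hne
    have := (h (-(c.re + 1) / p.re)).1
    rw [div_mul_cancel₀ _ hne] at this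
    linarith
  exact Complex.ext hre him

/-- A real-affine function of `z` that is bounded below on `ℂ` is constant. -/
lemma affine_conj_nonneg {a b c : ℂ} (h : ∀ z : ℂ, 0 ≤ c + (star z * a + z * b)) :
    a = 0 ∧ b = 0 := by
  apply linear_conj_zero
  intro z
  refine real_linear_nonneg (c := c) fun t => ?_
  convert h (t * z) using 2
  simp
  ring

/-! ### Extreme rays of the positive semidefinite cone -/

/-- `v vᴴ` spans an extreme ray: `B` vanishes on the orthogonal complement of `v`, hence by hermitian
symmetry is a multiple of `v vᴴ`. -/
lemma eq_smul_of_le_vecMulVec {ι : Type*} [Fintype ι] [DecidableEq ι] {v : ι → ℂ}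
    {B : Matrix ι ι ℂ} (hB : B.PosSemidef) (hvB : (vecMulVec v (star v) - B).PosSemidef) :
    ∃ c : ℂ, B = c • vecMulVec v (star v) := by
  have hker (x : ι → ℂ) (hx : star v ⬝ᵥ x = 0) : B *ᵥ x = 0 := by
    rw [← hB.dotProduct_mulVec_zero_iff]
    have h1 := hvB.dotProduct_mulVec_nonneg x
    have h2 := hB.dotProduct_mulVec_nonneg x
    rw [sub_mulVec, dotProduct_sub, vecMulVec_mulVec, hx] at h1
    simp at h1
    exact le_antisymm h1 h2
  by_cases hv : v = 0
  · refine ⟨0, ?_⟩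
    rw [zero_smul]
    refine Matrix.ext_of_mulVec_single fun i => ?_
    rw [hker _ (by simp [hv]), zero_mulVec]
  have hvv : star v ⬝ᵥ v ≠ 0 := by simpa using hv
  -- `x - (⟨v, x⟩ / ⟨v, v⟩) v` is orthogonal to `v`
  have hBx (x : ι → ℂ) : B *ᵥ x = ((star v ⬝ᵥ x) / (star v ⬝ᵥ v)) • B *ᵥ v := by
    have := hker (x - ((star v ⬝ᵥ x) / (star v ⬝ᵥ v)) • v) (by
      rw [dotProduct_sub, dotProduct_smul, smul_eq_mul, div_mul_cancel₀ _ hvv, sub_self])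
    rwa [mulVec_sub, mulVec_smul, sub_eq_zero] at this
  set s := star v ⬝ᵥ v
  have hent (i j : ι) : B i j = (star (v j) / s) * (B *ᵥ v) i := by
    have := congrFun (hBx (Pi.single j 1)) i
    simpa using this
  have hherm (i j : ι) : B i j = star (B j i) := (hB.isHermitian.apply i j).symm
  have hs : star s = s := (star_dotProduct v v).symm
  -- by hermitian symmetry `B v` is a multiple of `v`
  have hBv (i : ι) : (B *ᵥ v) i = v i * ((star (B *ᵥ v) ⬝ᵥ v) / s) := by
    have h (j : ι) : B i j = (v i / s) * star ((B *ᵥ v) j) := by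
      rw [hherm, hent j i, star_mul', star_div₀, star_star, hs]
    rw [mulVec, dotProduct, dotProduct, Finset.sum_div, Finset.mul_sum]
    refine Finset.sum_congr rfl fun j _ => ?_
    rw [h j, Pi.star_apply]
    ring
  refine ⟨((star (B *ᵥ v) ⬝ᵥ v) / s) / s, ?_⟩
  ext i j
  rw [hent i j, hBv i, Matrix.smul_apply, vecMulVec_apply, Pi.star_apply, smul_eq_mul]
  ring

/-- Extreme rays are spanned by matrices `w wᴴ`: writing `A = Mᴴ M` as the sum of the rank-one terms
given by the rows of `M`, extremality makes any nonzero term proportional to `A`. -/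
lemma eq_vecMulVec_of_extremal {ι : Type*} [Fintype ι] [DecidableEq ι] {A : Matrix ι ι ℂ}
    (hA : A.PosSemidef)
    (hext : ∀ B : Matrix ι ι ℂ, B.PosSemidef → (A - B).PosSemidef → ∃ c : ℂ, B = c • A) :
    ∃ w : ι → ℂ, A = vecMulVec w (star w) := by
  by_cases hA0 : A = 0
  · exact ⟨0, by simp [hA0]⟩
  obtain ⟨M, rfl⟩ : ∃ M : Matrix ι ι ℂ, A = Mᴴ * M := by
    open scoped MatrixOrder in
    obtain ⟨M, hM⟩ := CStarAlgebra.nonneg_iff_eq_star_mul_self.1 hA.nonneg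
    exact ⟨M, hM⟩
  have hsum : Mᴴ * M = ∑ k, vecMulVec (star (M k)) (star (star (M k))) := by
    ext i j
    simp [Matrix.mul_apply, Matrix.sum_apply, vecMulVec_apply]
  obtain ⟨k, hk⟩ : ∃ k, M k ≠ 0 := by
    by_contra! h
    exact hA0 (by rw [hsum]; simp [h])
  have hr := posSemidef_vecMulVec_self_star (star (M k))
  obtain ⟨c, hc⟩ := hext _ hr (by
    rw [hsum, ← Finset.sum_erase_add _ _ (Finset.mem_univ k), add_sub_cancel_right]
    exact posSemidef_sum _ fun i _ => posSemidef_vecMulVec_self_star _)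
  have hc0 : c ≠ 0 := by
    rintro rfl
    rw [zero_smul, vecMulVec_eq_zero] at hc
    simp [hk] at hc
  have hcpos : 0 ≤ c := by
    obtain ⟨i, hi⟩ : ∃ i, M k i ≠ 0 := by
      by_contra! h
      exact hk (funext h)
    have h1 := congrFun (congrFun hc i) i
    have h2 : 0 ≤ (Mᴴ * M) i i := hA.diag_nonneg
    have h3 : 0 < vecMulVec (star (M k)) (star (star (M k))) i i :=
      lt_of_le_of_ne hr.diag_nonneg (by simp [vecMulVec_apply, hi])
    rw [h1, Matrix.smul_apply, smul_eq_mul] at h3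
    exact (pos_of_mul_pos_left h3 h2).le
  obtain ⟨r, hr0, rfl⟩ : ∃ r : ℝ, 0 ≤ r ∧ c = r := by
    rw [Complex.nonneg_iff] at hcpos
    exact ⟨c.re, hcpos.1, Complex.ext rfl hcpos.2.symm⟩
  refine ⟨((Real.sqrt r)⁻¹ : ℂ) • star (M k), ?_⟩
  have hsq : ((Real.sqrt r : ℝ) : ℂ) * (Real.sqrt r : ℝ) = r := by
    rw [← Complex.ofReal_mul, Real.mul_self_sqrt hr0]
  rw [star_smul, smul_vecMulVec, vecMulVec_smul, hc, smul_smul, smul_smul]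
  have : ((Real.sqrt r : ℝ) : ℂ) ≠ 0 := by
    intro h; rw [h] at hsq; simp at hsq; simp [← hsq] at hc0
  rw [← hsq]
  simp
  field_simp
  simp

lemma posSemidef_le_smul_one {ι : Type*} [Fintype ι] [DecidableEq ι] {P : Matrix ι ι ℂ}
    (hP : P.PosSemidef) : ∃ c : ℂ, (c • (1 : Matrix ι ι ℂ) - P).PosSemidef := by
  open scoped MatrixOrder Matrix.Norms.L2Operator in
  have := IsSelfAdjoint.le_algebraMap_norm_self (a := P) hP.isHermitian
  refine ⟨(‖P‖ : ℂ), ?_⟩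
  rw [Matrix.le_iff, Algebra.algebraMap_eq_smul_one] at this
  have hc : (‖P‖ : ℂ) • (1 : Matrix ι ι ℂ) = ‖P‖ • (1 : Matrix ι ι ℂ) := by
    ext i j
    simp
  rw [hc]
  exact this

/-- The kernel of `Φ 1` is trivial because `1 = Φ (Φ⁻¹ 1) ≤ c Φ 1`. -/
lemma isUnit_map_one {ι : Type*} [Fintype ι] [DecidableEq ι]
    (Φ : Matrix ι ι ℂ ≃ₗ[ℂ] Matrix ι ι ℂ)
    (hΦ : ∀ A : Matrix ι ι ℂ, A.PosSemidef → (Φ A).PosSemidef)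
    (hΦinv : ∀ A : Matrix ι ι ℂ, A.PosSemidef → (Φ.symm A).PosSemidef) :
    IsUnit (Φ 1) := by
  obtain ⟨c, hc⟩ := posSemidef_le_smul_one (hΦinv 1 PosSemidef.one)
  have hc' := hΦ _ hc
  rw [map_sub, map_smul, LinearEquiv.apply_symm_apply] at hc'
  rw [← mulVec_injective_iff_isUnit]
  refine (injective_iff_map_eq_zero (Φ 1).mulVecLin).2 fun x hx => ?_
  rw [mulVecLin_apply] at hx
  have h := hc'.dotProduct_mulVec_nonneg x
  rw [sub_mulVec, smul_mulVec, hx, smul_zero, one_mulVec, zero_sub, dotProduct_neg,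
    neg_nonneg] at h
  exact dotProduct_star_self_eq_zero.1
    (le_antisymm h (dotProduct_star_self_nonneg x))

lemma exists_map_vecMulVec {ι : Type*} [Fintype ι] [DecidableEq ι]
    (Φ : Matrix ι ι ℂ ≃ₗ[ℂ] Matrix ι ι ℂ)
    (hΦ : ∀ A : Matrix ι ι ℂ, A.PosSemidef → (Φ A).PosSemidef)
    (hΦinv : ∀ A : Matrix ι ι ℂ, A.PosSemidef → (Φ.symm A).PosSemidef) (v : ι → ℂ) :
    ∃ w : ι → ℂ, Φ (vecMulVec v (star v)) = vecMulVec w (star w) := by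
  refine eq_vecMulVec_of_extremal (hΦ _ (posSemidef_vecMulVec_self_star v)) fun B hB hAB => ?_
  have h := hΦinv _ hAB
  rw [map_sub, LinearEquiv.symm_apply_apply] at h
  obtain ⟨c, hc⟩ := eq_smul_of_le_vecMulVec (hΦinv _ hB) h
  exact ⟨c, by rw [← map_smul, ← hc, LinearEquiv.apply_symm_apply]⟩

/-! ### Maps fixing the diagonal matrix units -/

lemma vecMulVec_two {ι : Type*} [DecidableEq ι] (i j : ι) (z : ℂ) :
    vecMulVec (Pi.single i 1 + Pi.single j z) (star (Pi.single i 1 + Pi.single j z : ι → ℂ)) =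
      single i i (1 : ℂ) + (star z • single i j (1 : ℂ) + z • single j i (1 : ℂ)) +
        (z * star z) • single j j (1 : ℂ) := by
  rw [star_add, Pi.star_single, Pi.star_single]
  ext k l
  simp [vecMulVec_apply, single_apply, Pi.single_apply]
  grind

/-- A linear map that sends every `v vᴴ` to some `w wᴴ` and fixes all `Eᵢᵢ` is conjugation by an
invertible diagonal matrix, possibly followed by transposition. -/
theorem normalized_classification {ι : Type*} [Fintype ι] [DecidableEq ι]
    (Ψ : Matrix ι ι ℂ →ₗ[ℂ] Matrix ι ι ℂ)
    (h1 : ∀ v : ι → ℂ, ∃ w : ι → ℂ, Ψ (vecMulVec v (star v)) = vecMulVec w (star w))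
    (h2 : ∀ i, Ψ (single i i 1) = single i i 1) :
    ∃ d : ι → ℂ, (∀ i, d i ≠ 0) ∧
      ((∀ X, Ψ X = diagonal d * X * (diagonal d)ᴴ) ∨
        (∀ X, Ψ X = (diagonal d * X * (diagonal d)ᴴ)ᵀ)) := by
  -- The `(k, k)` entry of `Ψ (v vᴴ)` for `v = eᵢ + z eⱼ` is affine in `z` when `k ≠ j`.
  have hdiag0 (i j k : ι) (hij : i ≠ j) (hkj : k ≠ j) :
      Ψ (single i j 1) k k = 0 ∧ Ψ (single j i 1) k k = 0 := by
    refine affine_conj_nonneg (c := Ψ (single i i 1) k k) fun z => ?_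
    obtain ⟨w, hw⟩ := h1 (Pi.single i 1 + Pi.single j z)
    have := congrFun (congrFun hw k) k
    rw [vecMulVec_two] at this
    simp only [map_add, map_smul, h2 j, Matrix.add_apply, Matrix.smul_apply, smul_eq_mul,
      vecMulVec_apply, Pi.star_apply] at this
    rw [single_apply_of_ne _ _ _ _ _ (by grind), mul_zero, add_zero] at this
    rw [this]
    exact mul_star_self_nonneg _
  have hdiag1 (i j k : ι) (hij : i ≠ j) : Ψ (single i j 1) k k = 0 := by
    by_cases hkj : k = j
    · exact (hdiag0 j i k hij.symm (by grind)).2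
    · exact (hdiag0 i j k hij hkj).1
  have hdiag (X : Matrix ι ι ℂ) (k : ι) : Ψ X k k = X k k := by
    induction X using Matrix.induction_on' with
    | h_zero => simp
    | h_add p q hp hq => simp [hp, hq]
    | h_std_basis i j x =>
      have : single i j x = x • single i j (1 : ℂ) := by simp
      rw [this, map_smul, Matrix.smul_apply, Matrix.smul_apply]
      congr 1
      by_cases hij : i = j
      · subst hij; rw [h2]
      · rw [hdiag1 i j k hij, single_apply_of_ne _ _ _ _ _ (by grind)]
  -- The 2×2 minors of `Ψ (v vᴴ)` vanish.
  have hminor (v : ι → ℂ) (i j k : ι) :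
      Ψ (vecMulVec v (star v)) i j * Ψ (vecMulVec v (star v)) j k =
        v j * star (v j) * Ψ (vecMulVec v (star v)) i k := by
    have := hdiag (vecMulVec v (star v)) j
    obtain ⟨w, hw⟩ := h1 v
    rw [hw] at this ⊢
    simp only [vecMulVec_apply, Pi.star_apply] at this ⊢
    linear_combination (w i * star (w k)) * this
  have hherm (v : ι → ℂ) (i j : ι) :
      star (Ψ (vecMulVec v (star v)) i j) = Ψ (vecMulVec v (star v)) j i := by
    obtain ⟨w, hw⟩ := h1 v
    simp [hw, vecMulVec_apply, mul_comm]
  have hzero (v : ι → ℂ) (k l : ι) (h : v k = 0 ∨ v l = 0) :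
      Ψ (vecMulVec v (star v)) k l = 0 := by
    have hk := hdiag (vecMulVec v (star v)) k
    have hl := hdiag (vecMulVec v (star v)) l
    obtain ⟨w, hw⟩ := h1 v
    rw [hw] at hk hl ⊢
    simp only [vecMulVec_apply, Pi.star_apply] at hk hl ⊢
    rcases h with h | h
    · rw [h, zero_mul, mul_eq_zero, star_eq_zero, or_self] at hk
      simp [hk]
    · rw [h, zero_mul, mul_eq_zero, star_eq_zero, or_self] at hl
      simp [hl]
  -- `hzero` for `v = eᵢ + z eⱼ`.
  have hsupp (i j k l : ι) (hkl : k ≠ l) (hij : i ≠ j)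
      (hk : (k ≠ i ∧ k ≠ j) ∨ (l ≠ i ∧ l ≠ j)) : Ψ (single i j 1) k l = 0 := by
    refine (linear_conj_zero (b := Ψ (single j i 1) k l) fun z => ?_).1
    have := hzero (Pi.single i 1 + Pi.single j z) k l (by
      rcases hk with hk | hk
      · left; simp [hk.1, hk.2]
      · right; simp [hk.1, hk.2])
    rw [vecMulVec_two] at this
    simp only [map_add, map_smul, h2, Matrix.add_apply, Matrix.smul_apply, smul_eq_mul] at this
    rw [single_apply_of_ne _ _ _ _ _ (by grind), single_apply_of_ne _ _ _ _ _ (by grind)] at this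
    simpa using this
  let a (k l : ι) : ℂ := Ψ (single k l 1) k l
  let b (k l : ι) : ℂ := Ψ (single l k 1) k l
  have hform (X : Matrix ι ι ℂ) (k l : ι) (hkl : k ≠ l) :
      Ψ X k l = a k l * X k l + b k l * X l k := by
    induction X using Matrix.induction_on' with
    | h_zero => simp
    | h_add p q hp hq => simp only [map_add, Matrix.add_apply, hp, hq]; ring
    | h_std_basis i j x =>
      have : single i j x = x • single i j (1 : ℂ) := by simp
      rw [this, map_smul, Matrix.smul_apply, Matrix.smul_apply, Matrix.smul_apply]
      simp only [smul_eq_mul]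
      suffices Ψ (single i j 1) k l = a k l * single i j 1 k l + b k l * single i j 1 l k by
        rw [this]; ring
      by_cases hij : i = j
      · subst hij
        rw [h2, single_apply_of_ne _ _ _ _ _ (by grind), single_apply_of_ne _ _ _ _ _ (by grind)]
        simp
      by_cases e1 : i = k ∧ j = l
      · obtain ⟨rfl, rfl⟩ := e1
        rw [single_apply_same, single_apply_of_ne _ _ _ _ _ (by grind)]
        simp [a]
      by_cases e2 : i = l ∧ j = k
      · obtain ⟨rfl, rfl⟩ := e2
        rw [single_apply_same, single_apply_of_ne _ _ _ _ _ (by grind)]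
        simp [b]
      rw [single_apply_of_ne _ _ _ _ _ (by grind), single_apply_of_ne _ _ _ _ _ (by grind),
        hsupp i j k l hkl hij (by grind)]
      simp
  have hvec (v : ι → ℂ) (k l : ι) (hkl : k ≠ l) : Ψ (vecMulVec v (star v)) k l =
      a k l * (v k * star (v l)) + b k l * (v l * star (v k)) := by
    rw [hform _ _ _ hkl]; rfl
  have hconj (i j : ι) (hij : i ≠ j) : star (a i j) = a j i ∧ star (b i j) = b j i := by
    have := linear_conj_zero (a := star (b i j) - b j i) (b := star (a i j) - a j i) fun z => by
      have := hherm (Pi.single i 1 + Pi.single j z) i j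
      rw [hvec _ _ _ hij, hvec _ _ _ hij.symm] at this
      simp [hij, hij.symm] at this
      simp
      linear_combination this
    exact ⟨sub_eq_zero.1 this.2, sub_eq_zero.1 this.1⟩
  -- The minor on rows `i, j` and columns `j, i`, for `v = eᵢ + z eⱼ`.
  have hpair (i j : ι) (hij : i ≠ j) : a i j * b j i = 0 ∧ a i j * a j i + b i j * b j i = 1 := by
    have := quadratic_conj_zero (P := a i j * b j i) (Q := b i j * a j i)
      (R := a i j * a j i + b i j * b j i - 1) fun z => by
      have := hminor (Pi.single i 1 + Pi.single j z) i j i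
      rw [hvec _ _ _ hij, hvec _ _ _ hij.symm, hdiag, vecMulVec_apply] at this
      simp [hij, hij.symm] at this
      simp
      linear_combination this
    exact ⟨this.1, sub_eq_zero.1 this.2.2⟩
  -- The minor on rows `i, j` and columns `j, k`, for `v = eᵢ + z eⱼ + x eₖ`.
  have htriple (i j k : ι) (hij : i ≠ j) (hjk : j ≠ k) (hik : i ≠ k) :
      a i j * b j k = 0 ∧ a i k = a i j * a j k ∧ b i k = b i j * b j k := by
    have key (x : ℂ) := quadratic_conj_zero (P := a i j * b j k * x) (Q := b i j * a j k * star x)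
      (R := star x * (a i j * a j k - a i k) + x * (b i j * b j k - b i k)) fun z => by
      have := hminor (Pi.single i 1 + Pi.single j z + Pi.single k x) i j k
      rw [hvec _ _ _ hij, hvec _ _ _ hjk, hvec _ _ _ hik] at this
      simp [hij, hij.symm, hjk, hjk.symm, hik, hik.symm] at this
      simp
      linear_combination this
    have h0 := (key 1).1
    have h3 := linear_conj_zero fun x => (key x).2.2
    exact ⟨by simpa using h0, (sub_eq_zero.1 h3.1).symm, (sub_eq_zero.1 h3.2).symm⟩
  rcases isEmpty_or_nonempty ι with he | ⟨⟨o⟩⟩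
  · exact ⟨fun _ => 1, by simp, Or.inl fun X => by ext i; exact he.elim i⟩
  -- `o` is a base point at which the cocycles `a`, `b` are trivialized.
  by_cases hb : ∀ j, o ≠ j → b o j = 0
  · have hb' (j : ι) (hj : j ≠ o) : b j o = 0 := by
      rw [← (hconj o j hj.symm).2, hb j hj.symm, star_zero]
    have hd (j : ι) (hj : j ≠ o) : a j o * a o j = 1 := by
      have := (hpair j o hj).2
      rwa [hb' j hj, zero_mul, add_zero] at this
    refine ⟨fun i => if i = o then 1 else a i o, fun i => ?_, Or.inl fun X => ?_⟩
    · dsimp only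
      split_ifs with hi
      · exact one_ne_zero
      · exact left_ne_zero_of_mul_eq_one (hd i hi)
    · ext i j
      rw [diagonal_conjTranspose, mul_diagonal, diagonal_mul]
      simp only [Pi.star_apply]
      by_cases hij : i = j
      · subst hij
        rw [hdiag]
        split_ifs with hi
        · simp
        · rw [(hconj i o hi).1]; linear_combination -X i i * hd i hi
      · rw [hform X i j hij]
        by_cases hi : i = o
        · subst hi
          rw [if_pos rfl, if_neg (Ne.symm hij), (hconj j i (Ne.symm hij)).1, hb j hij]
          ring
        by_cases hj : j = o
        · subst hj
          rw [if_neg hi, if_pos rfl, hb' i hi]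
          simp
        · have ht := htriple i o j hi (Ne.symm hj) hij
          rw [if_neg hi, if_neg hj, (hconj j o hj).1, ht.2.1, ht.2.2, hb' i hi]
          ring
  · push Not at hb
    obtain ⟨m, hom, hm⟩ := hb
    have ha' (j : ι) (hj : j ≠ o) : a j o = 0 := by
      by_cases hjm : j = m
      · subst hjm
        exact (mul_eq_zero.1 (hpair j o hj).1).resolve_right hm
      · exact (mul_eq_zero.1 (htriple j o m hj hom hjm).1).resolve_right hm
    have ha (j : ι) (hj : j ≠ o) : a o j = 0 := by
      rw [← (hconj j o hj).1, ha' j hj, star_zero]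
    have hd (j : ι) (hj : j ≠ o) : b j o * b o j = 1 := by
      have := (hpair j o hj).2
      rwa [ha' j hj, zero_mul, zero_add] at this
    -- The transpose accounts for `b o i` here in place of the `a i o` of the untransposed case.
    refine ⟨fun i => if i = o then 1 else b o i, fun i => ?_, Or.inr fun X => ?_⟩
    · dsimp only
      split_ifs with hi
      · exact one_ne_zero
      · exact right_ne_zero_of_mul_eq_one (hd i hi)
    · ext i j
      rw [transpose_apply, diagonal_conjTranspose, mul_diagonal, diagonal_mul]
      simp only [Pi.star_apply]
      by_cases hij : i = j
      · subst hij
        rw [hdiag]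
        split_ifs with hi
        · simp
        · rw [(hconj o i (Ne.symm hi)).2]; linear_combination -X i i * hd i hi
      · rw [hform X i j hij]
        by_cases hi : i = o
        · subst hi
          rw [if_pos rfl, if_neg (Ne.symm hij), ha j (Ne.symm hij)]
          simp
        by_cases hj : j = o
        · subst hj
          rw [if_neg hi, if_pos rfl, (hconj j i (Ne.symm hij)).2, ha' i hi]
          ring
        · have ht := htriple i o j hi (Ne.symm hj) hij
          rw [if_neg hi, if_neg hj, (hconj o i (Ne.symm hi)).2, ht.2.1, ht.2.2, ha' i hi]
          ring

/-! ### Classification -/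

/-- With `E = D̄⁻¹ C` the hypothesis becomes `E X Eᴴ = Xᵀ`. Taking for `X` the
matrix unit at `(0, 0)` gives `E 0 0 ≠ 0` and `E 1 0 = 0`, whereas the one at `(0, 1)` gives
`E 1 0 ≠ 0`. -/
lemma conj_ne_transpose_conj {n : ℕ} (hn : 1 < n) (C D : Matrix (Fin n) (Fin n) ℂ)
    (hD : IsUnit D) (h : ∀ X, C * X * Cᴴ = (D * X * Dᴴ)ᵀ) : False := by
  obtain ⟨D', hD'⟩ := hD.exists_left_inv
  have hE (X : Matrix (Fin n) (Fin n) ℂ) : (D'ᴴᵀ * C) * X * (D'ᴴᵀ * C)ᴴ = Xᵀ := by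
    have h1 : (D'ᴴᵀ * C) * X * (D'ᴴᵀ * C)ᴴ = D'ᴴᵀ * (C * X * Cᴴ) * D'ᵀ := by
      have h3 : D'ᴴᵀᴴ = D'ᵀ := by ext; simp
      simp only [Matrix.mul_assoc, conjTranspose_mul, h3]
    have h2 : Dᴴ * D'ᴴ = 1 := by rw [← conjTranspose_mul, hD', conjTranspose_one]
    rw [h1, h, ← transpose_mul, ← transpose_mul]
    congr 1
    calc D' * (D * X * Dᴴ * D'ᴴ) = (D' * D) * X * (Dᴴ * D'ᴴ) := by simp only [Matrix.mul_assoc]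
      _ = X := by rw [hD', h2, Matrix.one_mul, Matrix.mul_one]
  set E := D'ᴴᵀ * C
  have hent (i j k l : Fin n) : E k i * star (E l j) = single i j (1 : ℂ) l k := by
    have := congrFun (congrFun (hE (single i j 1)) k) l
    refine Eq.trans ?_ this
    simp [single_eq_single_vecMulVec_single, mul_vecMulVec, vecMulVec_mul, vecMulVec_apply]
  let p : Fin n := ⟨0, by omega⟩
  let q : Fin n := ⟨1, hn⟩
  have hpq : p ≠ q := by simp [p, q]
  have e1 := hent p p p p
  have e2 := hent p p q p
  have e3 := hent p q q p
  rw [single_apply_same] at e1 e3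
  rw [single_apply_of_ne _ _ _ _ _ (by grind)] at e2
  rcases mul_eq_zero.1 e2 with h0 | h0
  · simp [h0] at e3
  · simp [h0] at e1

lemma conj_vecMulVec {ι : Type*} [Fintype ι] (M : Matrix ι ι ℂ) (w : ι → ℂ) :
    M * vecMulVec w (star w) * Mᴴ = vecMulVec (M *ᵥ w) (star (M *ᵥ w)) := by
  rw [mul_vecMulVec, vecMulVec_mul, star_mulVec]

theorem order_isomorphism_classification (n : ℕ)
    (Φ : Matrix (Fin n) (Fin n) ℂ ≃ₗ[ℂ] Matrix (Fin n) (Fin n) ℂ)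
    (hΦ : ∀ A : Matrix (Fin n) (Fin n) ℂ, A.PosSemidef → (Φ A).PosSemidef)
    (hΦinv : ∀ A : Matrix (Fin n) (Fin n) ℂ, A.PosSemidef → (Φ.symm A).PosSemidef) :
    (∃ C : Matrix (Fin n) (Fin n) ℂ, IsUnit C ∧
      ((∀ X, Φ X = C * X * Cᴴ) ∨ (∀ X, Φ X = (C * X * Cᴴ)ᵀ))) ∧
    (1 < n → ¬ ∃ C D : Matrix (Fin n) (Fin n) ℂ, IsUnit C ∧ IsUnit D ∧
      ∀ X, C * X * Cᴴ = (D * X * Dᴴ)ᵀ) := by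
  refine ⟨?_, fun hn ⟨C, D, _, hD, h⟩ => conj_ne_transpose_conj hn C D hD h⟩
  have hrank := exists_map_vecMulVec Φ hΦ hΦinv
  have hsingle (i : Fin n) : single i i (1 : ℂ) =
      vecMulVec (Pi.single i 1) (star (Pi.single i 1 : Fin n → ℂ)) := by
    rw [single_eq_single_vecMulVec_single, Pi.star_single, star_one]
  choose w hw using fun i : Fin n => hrank (Pi.single i 1)
  let W : Matrix (Fin n) (Fin n) ℂ := (of w)ᵀ
  have hWe (i : Fin n) : W *ᵥ Pi.single i 1 = w i := by
    ext k; simp [W]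
  have hWW : W * Wᴴ = Φ 1 := by
    have h1 : (1 : Matrix (Fin n) (Fin n) ℂ) = ∑ i, single i i 1 := by
      ext k l
      simp [Matrix.sum_apply, single_apply, Matrix.one_apply, ite_and]
    rw [h1, map_sum]
    ext k l
    simp only [hsingle, hw]
    simp [Matrix.mul_apply, Matrix.sum_apply, vecMulVec_apply, W]
  have hW : IsUnit W := by
    have := isUnit_map_one Φ hΦ hΦinv
    rw [← hWW, isUnit_iff_isUnit_det, det_mul] at this
    exact (isUnit_iff_isUnit_det W).2 (isUnit_of_mul_isUnit_left this)
  obtain ⟨V, hVW⟩ := hW.exists_left_inv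
  have hWV : W * V = 1 := mul_eq_one_comm.1 hVW
  let Ψ : Matrix (Fin n) (Fin n) ℂ →ₗ[ℂ] Matrix (Fin n) (Fin n) ℂ :=
    { toFun := fun X => V * Φ X * Vᴴ
      map_add' := fun X Y => by rw [map_add, Matrix.mul_add, Matrix.add_mul]
      map_smul' := fun c X => by
        rw [map_smul, Matrix.mul_smul, Matrix.smul_mul, RingHom.id_apply] }
  have hΨ (X : Matrix (Fin n) (Fin n) ℂ) : Ψ X = V * Φ X * Vᴴ := rfl
  have hΦΨ (X : Matrix (Fin n) (Fin n) ℂ) : Φ X = W * Ψ X * Wᴴ := by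
    have h2 : Vᴴ * Wᴴ = 1 := by rw [← conjTranspose_mul, hWV, conjTranspose_one]
    calc Φ X = (W * V) * Φ X * (Vᴴ * Wᴴ) := by rw [hWV, h2, Matrix.one_mul, Matrix.mul_one]
      _ = W * Ψ X * Wᴴ := by simp only [hΨ, Matrix.mul_assoc]
  obtain ⟨d, hd, h⟩ := normalized_classification Ψ
    (fun v => by
      obtain ⟨u, hu⟩ := hrank v
      exact ⟨V *ᵥ u, by rw [hΨ, hu, conj_vecMulVec]⟩)
    (fun i => by
      rw [hΨ, hsingle, hw, conj_vecMulVec, ← hWe, mulVec_mulVec, hVW, one_mulVec])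
  have hD : IsUnit (diagonal d) := by
    rw [isUnit_diagonal, Pi.isUnit_iff]
    exact fun i => (hd i).isUnit
  rcases h with h | h
  · refine ⟨W * diagonal d, hW.mul hD, Or.inl fun X => ?_⟩
    rw [hΦΨ, h, conjTranspose_mul]
    simp only [Matrix.mul_assoc]
  · -- `W Yᵀ Wᴴ = (W̄ Y W̄ᴴ)ᵀ`, where `W̄ = Wᴴᵀ` is the entrywise conjugate
    have hW' : IsUnit Wᴴᵀ := by
      rw [isUnit_transpose, isUnit_conjTranspose]
      exact hW
    have hWc : Wᴴᵀᴴ = Wᵀ := by ext; simp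
    refine ⟨Wᴴᵀ * diagonal d, hW'.mul hD, Or.inr fun X => ?_⟩
    rw [hΦΨ, h, conjTranspose_mul, hWc]
    simp only [transpose_mul, transpose_transpose, Matrix.mul_assoc]
end
end

section
/- Let (B_i)_{i ∈ ι} be a finite family of matrices in M_n(ℂ) such that B_0 := Σ_i B_i ⊗ B_i is positive semidefinite, and let Φ : M_n(ℂ) → M_n(ℂ) be a positive linear map (i.e., Φ maps positive semidefinite matrices to positive semidefinite matrices). Then for all positive semidefinite X, Y ∈ M_n(ℂ), the inner product ⟨Σ_i Φ(B_i) ⊗ B_i, X ⊗ Y⟩ = tr((Σ_i Φ(B_i) ⊗ B_i)ᴴ (X ⊗ Y)) is a nonnegative real number. -/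
/-!
The trace pairing factorises on products: `tr ((A ⊗ B) (X ⊗ Y)) = tr (A X) tr (B Y)`. Hence
`tr ((∑ Φ(Bᵢ) ⊗ Bᵢ) (X ⊗ Y)) = tr (Φ(C) X)` with `C = ∑ tr (Bᵢ Y) Bᵢ`, which is the partial trace
of `(∑ Bᵢ ⊗ Bᵢ) (1 ⊗ Y)`. The matrix `C` is positive semidefinite, since
`vᴴ C v = tr ((∑ Bᵢ ⊗ Bᵢ) (v vᴴ ⊗ Y))` is the trace of a product of two positive semidefinite
matrices (`trace_mul_nonneg`). So `Φ(C)` is positive semidefinite and `tr (Φ(C) X) ≥ 0`. The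
conjugate transpose in the Hilbert–Schmidt product only conjugates the value, as `X ⊗ Y` is
Hermitian.
-/

open Matrix Kronecker
open scoped ComplexOrder

noncomputable section

/-- With `Q = Dᴴ D`, the trace of `P Q` is that of the positive semidefinite `D P Dᴴ`. -/
theorem trace_mul_nonneg {m : Type*} [Fintype m] {P Q : Matrix m m ℂ}
    (hP : P.PosSemidef) (hQ : Q.PosSemidef) : 0 ≤ (P * Q).trace := by
  classical
  open scoped MatrixOrder in
  obtain ⟨D, rfl⟩ := CStarAlgebra.nonneg_iff_eq_star_mul_self.mp hQ.nonneg
  rw [star_eq_conjTranspose, ← Matrix.mul_assoc, Matrix.trace_mul_comm, ← Matrix.mul_assoc]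
  exact (hP.mul_mul_conjTranspose_same D).trace_nonneg

/-- Over `ℂ`, Hermitian symmetry is automatic from nonnegativity of the quadratic form. -/
theorem posSemidef_of_forall_nonneg {m : Type*} [Fintype m] {M : Matrix m m ℂ}
    (h : ∀ v : m → ℂ, 0 ≤ star v ⬝ᵥ (M *ᵥ v)) : M.PosSemidef := by
  classical
  rw [← Matrix.isPositive_toEuclideanLin_iff, LinearMap.isPositive_iff_complex]
  intro x
  have hx : 0 ≤ inner ℂ (M.toEuclideanLin x) x := by
    rw [← inner_conj_symm, EuclideanSpace.inner_eq_star_dotProduct, dotProduct_comm]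
    exact star_nonneg_iff.mpr (h x.ofLp)
  obtain ⟨h1, h2⟩ := Complex.nonneg_iff.mp hx
  exact ⟨Complex.ext (by simp) (by simpa using h2), h1⟩

theorem trace_sum_kronecker_mul {n : ℕ} {ι : Type*} [Fintype ι]
    (A B : ι → Matrix (Fin n) (Fin n) ℂ) (X Y : Matrix (Fin n) (Fin n) ℂ) :
    ((∑ i, A i ⊗ₖ B i) * (X ⊗ₖ Y)).trace = ((∑ i, (B i * Y).trace • A i) * X).trace := by
  simp only [Finset.sum_mul, Matrix.trace_sum, ← mul_kronecker_mul, trace_kronecker,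
    Matrix.smul_mul, Matrix.trace_smul, smul_eq_mul, mul_comm]

theorem entanglement_witness_nonneg_on_products (n : ℕ) (ι : Type*) [Fintype ι]
    (B : ι → Matrix (Fin n) (Fin n) ℂ)
    (hB0 : (∑ i, B i ⊗ₖ B i).PosSemidef)
    (Φ : Matrix (Fin n) (Fin n) ℂ →ₗ[ℂ] Matrix (Fin n) (Fin n) ℂ)
    (hΦ : ∀ A : Matrix (Fin n) (Fin n) ℂ, A.PosSemidef → (Φ A).PosSemidef) :
    ∀ X Y : Matrix (Fin n) (Fin n) ℂ, X.PosSemidef → Y.PosSemidef →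
      0 ≤ ((∑ i, Φ (B i) ⊗ₖ B i)ᴴ * (X ⊗ₖ Y)).trace := by
  intro X Y hX hY
  have hC : (∑ i, (B i * Y).trace • B i).PosSemidef := by
    refine posSemidef_of_forall_nonneg fun v => ?_
    have h := trace_mul_nonneg hB0 ((posSemidef_vecMulVec_self_star v).kronecker hY)
    rwa [trace_sum_kronecker_mul, mul_vecMulVec, trace_vecMulVec, dotProduct_comm] at h
  have hmain : 0 ≤ ((∑ i, Φ (B i) ⊗ₖ B i) * (X ⊗ₖ Y)).trace := by
    rw [trace_sum_kronecker_mul]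
    simpa only [map_sum, map_smul] using trace_mul_nonneg (hΦ _ hC) hX
  rw [← (hX.kronecker hY).isHermitian.eq, ← conjTranspose_mul, trace_conjTranspose,
    Matrix.trace_mul_comm]
  exact star_nonneg_iff.mpr hmain
end
end

section
/- Let m ≥ 0 and p ≥ 1. For s : Fin m → Fin 4, let σ_s be the matrix indexed by (Fin m → Fin 2) with entries σ_s(x,y) = ∏_{i} σ_{s(i)}(x(i), y(i)) (the m-fold tensor product of Pauli matrices). Then a linear map Ψ : Matrix (Fin m → Fin 2) (Fin m → Fin 2) ℂ → M_p(ℂ) is completely co-positive if and only if Σ_{s : Fin m → Fin 4} Ψ(σ_s) ⊗ σ_s (a matrix indexed by Fin p × (Fin m → Fin 2), ⊗ the Kronecker product) is positive semidefinite. -/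
/-!
The single-qubit identity `∑_c σ_c(a,b) σ_c(x,y) = 2 δ_{ay} δ_{bx}` tensorizes to
`∑ₛ σₛ(x,y) σₛ = 2^m E_{yx}` (`sum_pauliTensor_smul`). By linearity the `((i,x),(j,y))` entry of
`∑ₛ Ψ(σₛ) ⊗ σₛ` is therefore `2^m Ψ(E_{yx})_{ij}`, which is `2^m` times the `((y,j),(x,i))` entry of
the Choi matrix of `t ∘ Ψ`. So the Pauli sum is, up to a positive factor, a relabelling and a
transposition, the Choi matrix of `t ∘ Ψ`, and the claim is Choi's theorem
(`isCompletelyPositive_iff_choi`).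

For Choi's theorem, the Choi matrix is the image of a rank-one positive matrix under an
amplification of `Φ`. Conversely the amplification of `Φ` at `A` has entries
`∑_{a,b} A((r,a),(s,b)) C((a,i),(b,j))`, and this is a compression of a principal submatrix of
`A ⊗ C` (`PosSemidef.sum_blocks`).
-/

open Matrix Kronecker
open scoped ComplexOrder

noncomputable section

/-- The transpose of a linear map `L` on square matrices with respect to the bilinear form
`(A, B) ↦ tr(Aᵀ B)`: the map whose matrix in the standard basis `{E_{ij}}` is the transpose
of the matrix of `L`. -/
def lmapTranspose {ι : Type*} [Fintype ι] [DecidableEq ι]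
    (L : Matrix ι ι ℂ →ₗ[ℂ] Matrix ι ι ℂ) : Matrix ι ι ℂ →ₗ[ℂ] Matrix ι ι ℂ :=
  (LinearMap.toMatrix (Matrix.stdBasis ℂ ι ι) (Matrix.stdBasis ℂ ι ι)).symm
    ((LinearMap.toMatrix (Matrix.stdBasis ℂ ι ι) (Matrix.stdBasis ℂ ι ι) L)ᵀ)
/-- The Pauli matrices `σ_0, σ_1, σ_2, σ_3`. -/
def pauli : Fin 4 → Matrix (Fin 2) (Fin 2) ℂ :=
  ![!![1, 0; 0, 1], !![0, 1; 1, 0], !![0, -Complex.I; Complex.I, 0], !![1, 0; 0, -1]]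

/-- The `m`-fold tensor product of Pauli matrices indexed by `s : Fin m → Fin 4`. -/
def pauliTensor (m : ℕ) (s : Fin m → Fin 4) :
    Matrix (Fin m → Fin 2) (Fin m → Fin 2) ℂ :=
  Matrix.of fun x y => ∏ i : Fin m, pauli (s i) (x i) (y i)

/-- The Choi matrix of `Φ`: its `(a,b)` block is `Φ(E_{ab})`. -/
def choiMatrix {α : Type*} [DecidableEq α] {p : ℕ}
    (Φ : Matrix α α ℂ →ₗ[ℂ] Matrix (Fin p) (Fin p) ℂ) :
    Matrix (α × Fin p) (α × Fin p) ℂ :=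
  Matrix.of fun u v => Φ (Matrix.single u.1 v.1 1) u.2 v.2

/-- Summing all entries inside each block preserves positive semidefiniteness: it is the
compression `Vᴴ H V` by `V((u,a),v) = δ_{uv}`. -/
theorem PosSemidef.sum_blocks {β α : Type*} [Fintype β] [DecidableEq β] [Fintype α]
    {H : Matrix (β × α) (β × α) ℂ} (hH : H.PosSemidef) :
    (Matrix.of fun u v : β => ∑ a, ∑ b, H (u, a) (v, b)).PosSemidef := by
  let V : Matrix (β × α) β ℂ := Matrix.of fun w v => if w.1 = v then 1 else 0
  convert hH.conjTranspose_mul_mul_same V using 1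
  ext u v
  simp only [of_apply, Matrix.mul_apply, conjTranspose_apply, V, Fintype.sum_prod_type]
  simp only [apply_ite (star : ℂ → ℂ), star_one, star_zero, ite_mul, mul_ite, one_mul, mul_one,
    zero_mul, mul_zero, Finset.sum_ite_irrel, Finset.sum_const_zero, Finset.sum_ite_eq',
    Finset.mem_univ, if_true]
  exact Finset.sum_comm

theorem map_apply_eq_sum_choi {α : Type*} [Fintype α] [DecidableEq α] {p : ℕ}
    (Φ : Matrix α α ℂ →ₗ[ℂ] Matrix (Fin p) (Fin p) ℂ) (X : Matrix α α ℂ) (i j : Fin p) :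
    Φ X i j = ∑ a, ∑ b, X a b * choiMatrix Φ (a, i) (b, j) := by
  have h (a b : α) : Matrix.single a b (X a b) = X a b • Matrix.single a b (1 : ℂ) := by
    simp
  conv_lhs => rw [Matrix.matrix_eq_sum_single X]
  simp only [h, map_sum, map_smul, Matrix.sum_apply, Matrix.smul_apply, smul_eq_mul, choiMatrix,
    of_apply]

/-- Choi's theorem. Nonemptiness of `α` supplies an amplification of size `card α ≥ 1`. -/
theorem isCompletelyPositive_iff_choi {α : Type*} [Fintype α] [DecidableEq α] [Nonempty α] {p : ℕ}
    (Φ : Matrix α α ℂ →ₗ[ℂ] Matrix (Fin p) (Fin p) ℂ) :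
    IsCompletelyPositive Φ ↔ (choiMatrix Φ).PosSemidef := by
  constructor
  · intro h
    let e := Fintype.equivFin α
    -- The unnormalized maximally entangled vector `∑ₐ eₐ ⊗ eₐ`.
    let w : Fin (Fintype.card α) × α → ℂ := fun u => if u.1 = e u.2 then 1 else 0
    have hA := h _ Fintype.card_pos _ (posSemidef_vecMulVec_self_star w)
    convert hA.submatrix (fun u : α × Fin p => (e u.1, u.2)) using 1
    ext u v
    simp only [choiMatrix, of_apply, submatrix_apply]
    refine congrArg (fun X => Φ X u.2 v.2) ?_
    ext a b
    simp only [Matrix.single_apply, of_apply, vecMulVec_apply, w, Pi.star_apply,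
      EmbeddingLike.apply_eq_iff_eq, apply_ite (star : ℂ → ℂ), star_one, star_zero]
    split_ifs <;> simp_all
  · intro h k _ A hA
    have hB := PosSemidef.sum_blocks (β := Fin k × Fin p) (α := α)
      ((hA.kronecker h).submatrix
        fun u : (Fin k × Fin p) × α => ((u.1.1, u.2), (u.2, u.1.2)))
    convert hB using 1
    ext r s
    simp only [of_apply, map_apply_eq_sum_choi, submatrix_apply, kroneckerMap_apply]

theorem sum_pauli_mul_pauli (a b x y : Fin 2) :
    ∑ c, pauli c x y * pauli c a b = if a = y ∧ b = x then 2 else 0 := by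
  fin_cases a <;> fin_cases b <;> fin_cases x <;> fin_cases y <;>
    simp [pauli, Fin.sum_univ_four] <;> norm_num

/-- The Pauli expansion of a matrix unit. -/
theorem sum_pauliTensor_smul (m : ℕ) (x y : Fin m → Fin 2) :
    ∑ s, pauliTensor m s x y • pauliTensor m s = (2 ^ m : ℂ) • Matrix.single y x (1 : ℂ) := by
  ext a b
  simp only [Matrix.sum_apply, Matrix.smul_apply, smul_eq_mul, pauliTensor, of_apply,
    ← Finset.prod_mul_distrib, Matrix.single_apply]
  rw [← Fintype.prod_sum fun i c => pauli c (x i) (y i) * pauli c (a i) (b i)]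
  simp only [sum_pauli_mul_pauli]
  by_cases h : y = a ∧ x = b
  · obtain ⟨rfl, rfl⟩ := h
    simp
  · rw [if_neg h, mul_zero, Finset.prod_eq_zero_iff]
    contrapose! h
    have h' : ∀ i, a i = y i ∧ b i = x i := fun i => by
      by_contra hi
      exact h i (Finset.mem_univ i) (if_neg hi)
    exact ⟨funext fun i => (h' i).1.symm, funext fun i => (h' i).2.symm⟩

/-- The Pauli sum is the transposed Choi matrix of `t ∘ Ψ`, with tensor factors swapped and scaled
by `2^m`. -/
theorem sum_kronecker_pauliTensor (m p : ℕ)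
    (Ψ : Matrix (Fin m → Fin 2) (Fin m → Fin 2) ℂ →ₗ[ℂ] Matrix (Fin p) (Fin p) ℂ) :
    ∑ s : Fin m → Fin 4, Ψ (pauliTensor m s) ⊗ₖ pauliTensor m s =
      (2 ^ m : ℂ) •
        ((choiMatrix (transposeMap (Fin p) ∘ₗ Ψ))ᵀ.submatrix Prod.swap Prod.swap) := by
  ext ⟨i, x⟩ ⟨j, y⟩
  have h := congrArg (fun X => Ψ X i j) (sum_pauliTensor_smul m x y)
  simp only [map_sum, map_smul, Matrix.sum_apply, Matrix.smul_apply, smul_eq_mul] at h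
  simp only [Matrix.sum_apply, kroneckerMap_apply, Matrix.smul_apply, smul_eq_mul,
    submatrix_apply, transpose_apply, choiMatrix, of_apply, Prod.swap, LinearMap.comp_apply,
    transposeMap, LinearMap.coe_mk, AddHom.coe_mk]
  rw [← h]
  exact Finset.sum_congr rfl fun s _ => mul_comm _ _

theorem ccp_iff_pauli_choi_positive (m p : ℕ) (hp : 1 ≤ p)
    (Ψ : Matrix (Fin m → Fin 2) (Fin m → Fin 2) ℂ →ₗ[ℂ] Matrix (Fin p) (Fin p) ℂ) :
    IsCompletelyPositive (transposeMap (Fin p) ∘ₗ Ψ) ↔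
      (∑ s : Fin m → Fin 4, Ψ (pauliTensor m s) ⊗ₖ pauliTensor m s).PosSemidef := by
  rw [isCompletelyPositive_iff_choi, sum_kronecker_pauliTensor]
  have h2 : (0 : ℂ) < 2 ^ m := by positivity
  constructor
  · intro h
    exact (h.transpose.submatrix _).smul h2.le
  · intro h
    have h' := ((h.smul (inv_pos.mpr h2).le).submatrix Prod.swap).transpose
    rw [inv_smul_smul₀ h2.ne'] at h'
    simpa using h'
end
end
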